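/- (Theorem 1, uniformly bounded terminal accuracy of two-step relaxed SBPC.) Let E, F be real normed vector spaces, a_x, a_u class-𝒦 functions, and f : E → F → E satisfy ‖f(x¹,u) − f(x²,u)‖ ≤ a_x(‖x¹ − x²‖) and ‖f(x,u¹) − f(x,u²)‖ ≤ a_u(‖u¹ − u²‖) for all arguments. Let U_c ⊆ F, let X_f ⊆ E be nonempty, let L ≥ 1 and k_f ≥ 1 with L dividing k_f, and let d̄ > 0. Suppose: (i) at time 0, there exists an admissible blocked sequence v₀ (v₀(i) ∈ U_c for i = 1,…,N(0)) whose nominal blocked-input trajectory from x̃(0) has terminal state in X_f; (ii) for each k = 0,…,k_f−1, the controller selects an admissible blocked sequence v^r_k at (x̃(k), k) whose nominal terminal distance Δ(x(k_f−k|k), X_f) is less than or equal to that achieved by every admissible blocked sequence at (x̃(k), k); (iii) the closed loop evolves as x̃(k+1) = f(x̃(k), v^r_k(1) + d(k)) with ‖d(k)‖ ≤ d̄. Then the terminal state satisfies Δ(x̃(k_f), X_f) ≤ Σ_{k=0}^{k_f−1} β_{k_f−k−1}(d̄), where β_0(d) = a_u(d) and β_j(d) = a_u(d) + a_x(β_{j−1}(d))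 for j ≥ 1. -/

import Mathlib

/-!
Compare the least nominal terminal distance to `Xf` at consecutive times. The tail of the
sequence applied at time `k` is admissible at time `k + 1`, because `L ∣ kf` makes the last block
end exactly at `kf`; started from the undisturbed successor state it reproduces the rest of the
nominal trajectory. The true successor state is off by at most `au dbar`, and propagating this
error through the remaining `kf - k - 1` nominal steps applies `ax` that many times. So the least
distance grows by at most `ax^[kf - k - 1] (au dbar) ≤ beta au ax (kf - k - 1) dbar` at time `k`,
while at time `kf` it is the distance of the state itself.
-/

open scoped NNReal

/-- A function `a : [0,∞) → [0,∞)` is of class 𝒦 if it is continuous,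
strictly increasing, and satisfies `a 0 = 0`. -/
def IsClassK (a : ℝ≥0 → ℝ≥0) : Prop :=
  Continuous a ∧ StrictMono a ∧ a 0 = 0

/-- The sequence β_k defined by β_0 = a_u and β_k(d) = a_u(d) + a_x(β_{k-1}(d)). -/
def beta (au ax : ℝ≥0 → ℝ≥0) : ℕ → ℝ≥0 → ℝ≥0
  | 0, d => au d
  | k + 1, d => au d + ax (beta au ax k d)

/-- The blocking index b(j,k) = ⌊(j + k − ⌊k/L⌋·L)/L⌋ + 1. -/
def bIdx (L j k : ℕ) : ℕ := (j + k - k / L * L) / L + 1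

/-- The number of free (blocked) input values N(k) = ⌈(k_f − k)/L⌉. -/
def Nfree (L kf k : ℕ) : ℕ := (kf - k + L - 1) / L

/-- The nominal blocked-input trajectory x(j|k) from state x at time k:
x(0|k) = x and x(j+1|k) = f(x(j|k), v(b(j,k))). -/
def traj {E F : Type*} (f : E → F → E) (L : ℕ) (v : ℕ → F) (x : E) (k : ℕ) : ℕ → E
  | 0 => x
  | j + 1 => f (traj f L v x k j) (v (bIdx L j k))

/-- A blocked input sequence v is admissible at time k if v(i) ∈ U_c for i = 1,…,N(k). -/
def Admissible {F : Type*} (Uc : Set F) (L kf k : ℕ) (v : ℕ → F) : Prop :=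
  ∀ i, 1 ≤ i → i ≤ Nfree L kf k → v i ∈ Uc

/-- The blocked sequence that continues `v` once its first step has been applied at time `k`.
The shift is the number of blocks ending with that step: `1` if `L ∣ k + 1` and `0` otherwise. -/
def blockedTail {F : Type*} (L k : ℕ) (v : ℕ → F) (i : ℕ) : F :=
  v (i + ((k + 1) / L - k / L))

/-- The nominal terminal distance `Δ(x(k_f−k|k), X_f)` of the blocked sequence `v` from state `x`
at time `k`, which the controller minimizes over `v`. -/
noncomputable def terminalMiss {E F : Type*} [PseudoMetricSpace E] (f : E → F → E) (Xf : Set E)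
    (L kf k : ℕ) (x : E) (v : ℕ → F) : ℝ≥0 :=
  Metric.infNndist (traj f L v x k (kf - k)) Xf

lemma bIdx_eq (L j k : ℕ) : bIdx L j k = (j + k) / L - k / L + 1 := by
  rw [bIdx, mul_comm, Nat.sub_mul_div]

lemma bIdx_zero (L k : ℕ) : bIdx L 0 k = 1 := by
  rw [bIdx_eq, zero_add, Nat.sub_self]

lemma bIdx_succ_right_add_shift (L j k : ℕ) :
    bIdx L j (k + 1) + ((k + 1) / L - k / L) = bIdx L (j + 1) k := by
  have h_first : k / L ≤ (k + 1) / L := Nat.div_le_div_right k.le_succ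
  have h_rest : (k + 1) / L ≤ (j + (k + 1)) / L := Nat.div_le_div_right (Nat.le_add_left _ _)
  rw [bIdx_eq, bIdx_eq, add_right_comm j 1 k, add_assoc j k 1]
  omega

lemma Nfree_eq_of_dvd {L kf : ℕ} (hdvd : L ∣ kf) (k : ℕ) : Nfree L kf k = kf / L - k / L := by
  obtain ⟨m, rfl⟩ := hdvd
  obtain rfl | hL := L.eq_zero_or_pos
  · simp [Nfree]
  refine eq_of_forall_ge_iff fun n ↦ ?_
  calc Nfree L (L * m) k ≤ n
    _ ↔ L * m - k ≤ L * n := by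
      rw [Nfree, ← Nat.ceilDiv_eq_add_pred_div, ceilDiv_le_iff_le_mul hL]
    _ ↔ L * (m - n) ≤ k := by rw [Nat.mul_sub]; omega
    _ ↔ m - n ≤ k / L := by rw [Nat.le_div_iff_mul_le hL, mul_comm]
    _ ↔ L * m / L - k / L ≤ n := by rw [Nat.mul_div_cancel_left m hL, tsub_le_iff_tsub_le]

lemma Nfree_succ_add_shift {L kf k : ℕ} (hdvd : L ∣ kf) (hk : k < kf) :
    Nfree L kf (k + 1) + ((k + 1) / L - k / L) = Nfree L kf k := by
  have h_first : k / L ≤ (k + 1) / L := Nat.div_le_div_right k.le_succ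
  have h_rest : (k + 1) / L ≤ kf / L := Nat.div_le_div_right hk
  rw [Nfree_eq_of_dvd hdvd, Nfree_eq_of_dvd hdvd]
  omega

lemma Admissible.blockedTail {F : Type*} {Uc : Set F} {L kf k : ℕ} {v : ℕ → F}
    (hv : Admissible Uc L kf k v) (hdvd : L ∣ kf) (hk : k < kf) :
    Admissible Uc L kf (k + 1) (blockedTail L k v) := fun _ hi hiN ↦
  hv _ (Nat.le_add_right_of_le hi)
    (Nfree_succ_add_shift hdvd hk ▸ Nat.add_le_add_right hiN _)

lemma traj_blockedTail {E F : Type*} (f : E → F → E) (L : ℕ) (v : ℕ → F) (x : E) (k j : ℕ) :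
    traj f L (blockedTail L k v) (f x (v 1)) (k + 1) j = traj f L v x k (j + 1) := by
  induction j with
  | zero => simp only [traj, bIdx_zero]
  | succ j ih => simp only [traj, ih, blockedTail, bIdx_succ_right_add_shift]

lemma iterate_le_beta {ax : ℝ≥0 → ℝ≥0} (hax : Monotone ax) (au : ℝ≥0 → ℝ≥0) (j : ℕ) (δ : ℝ≥0) :
    ax^[j] (au δ) ≤ beta au ax j δ := by
  induction j with
  | zero => exact le_rfl
  | succ j ih =>
    rw [Function.iterate_succ_apply']
    exact (hax ih).trans le_add_self

lemma infNndist_le_infNndist_add_nndist {E : Type*} [PseudoMetricSpace E] (x y : E) (s : Set E) :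
    Metric.infNndist x s ≤ Metric.infNndist y s + nndist x y :=
  NNReal.coe_le_coe.1 Metric.infDist_le_infDist_add_dist

section Perturbation

variable {E F : Type*} [PseudoMetricSpace E] {f : E → F → E} {ax : ℝ≥0 → ℝ≥0}

lemma nndist_traj_le_iterate (hax : Monotone ax)
    (hfx : ∀ x₁ x₂ u, nndist (f x₁ u) (f x₂ u) ≤ ax (nndist x₁ x₂))
    (L : ℕ) (v : ℕ → F) (x y : E) (k j : ℕ) :
    nndist (traj f L v x k j) (traj f L v y k j) ≤ ax^[j] (nndist x y) := by
  induction j with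
  | zero => exact le_rfl
  | succ j ih =>
    rw [Function.iterate_succ_apply']
    exact (hfx _ _ _).trans (hax ih)

lemma terminalMiss_blockedTail_le (hax : Monotone ax)
    (hfx : ∀ x₁ x₂ u, nndist (f x₁ u) (f x₂ u) ≤ ax (nndist x₁ x₂))
    (Xf : Set E) (L : ℕ) {kf k : ℕ} (hk : k < kf) (v : ℕ → F) (x y : E) :
    terminalMiss f Xf L kf (k + 1) y (blockedTail L k v) ≤
      terminalMiss f Xf L kf k x v + ax^[kf - k - 1] (nndist y (f x (v 1))) := by
  have h_horizon : kf - (k + 1) + 1 = kf - k := by omega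
  have h_error := nndist_traj_le_iterate hax hfx L (blockedTail L k v) y (f x (v 1)) (k + 1)
    (kf - (k + 1))
  rw [traj_blockedTail, h_horizon] at h_error
  exact (infNndist_le_infNndist_add_nndist _ _ Xf).trans (add_le_add le_rfl h_error)

lemma exists_admissible_terminalMiss_le (hax : Monotone ax)
    (hfx : ∀ x₁ x₂ u, nndist (f x₁ u) (f x₂ u) ≤ ax (nndist x₁ x₂))
    {Uc : Set F} {Xf : Set E} {L kf : ℕ} (hdvd : L ∣ kf)
    {xt : ℕ → E} {vr : ℕ → ℕ → F} {ε : ℕ → ℝ≥0}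
    (hadm : ∀ k < kf, Admissible Uc L kf k (vr k))
    (hopt : ∀ k < kf, ∀ v, Admissible Uc L kf k v →
      terminalMiss f Xf L kf k (xt k) (vr k) ≤ terminalMiss f Xf L kf k (xt k) v)
    (herr : ∀ k < kf, nndist (xt (k + 1)) (f (xt k) (vr k 1)) ≤ ε k)
    {v₀ : ℕ → F} (hv₀ : Admissible Uc L kf 0 v₀) {k : ℕ} (hk : k ≤ kf) :
    ∃ v, Admissible Uc L kf k v ∧ terminalMiss f Xf L kf k (xt k) v ≤
      terminalMiss f Xf L kf 0 (xt 0) v₀ + ∑ i ∈ Finset.range k, ax^[kf - i - 1] (ε i) := by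
  induction k with
  | zero => exact ⟨v₀, hv₀, by simp⟩
  | succ k ih =>
    obtain ⟨v, hv, hv_le⟩ := ih (Nat.le_of_succ_le hk)
    refine ⟨blockedTail L k (vr k), (hadm k hk).blockedTail hdvd hk, ?_⟩
    rw [Finset.sum_range_succ, ← add_assoc]
    calc terminalMiss f Xf L kf (k + 1) (xt (k + 1)) (blockedTail L k (vr k))
      _ ≤ terminalMiss f Xf L kf k (xt k) (vr k)
            + ax^[kf - k - 1] (nndist (xt (k + 1)) (f (xt k) (vr k 1))) :=
        terminalMiss_blockedTail_le hax hfx Xf L hk (vr k) (xt k) (xt (k + 1))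
      _ ≤ _ := add_le_add ((hopt k hk v hv).trans hv_le) (hax.iterate _ (herr k hk))

end Perturbation

theorem relaxed_SBPC_terminal_accuracy_general {E F : Type*}
    [PseudoMetricSpace E] [SeminormedAddCommGroup F]
    {ax au : ℝ≥0 → ℝ≥0} (hax : Monotone ax) (hau : Monotone au) {f : E → F → E}
    (hfx : ∀ x₁ x₂ u, nndist (f x₁ u) (f x₂ u) ≤ ax (nndist x₁ x₂))
    (hfu : ∀ x u₁ u₂, nndist (f x u₁) (f x u₂) ≤ au (nndist u₁ u₂))
    {Uc : Set F} {Xf : Set E} (hXf : Xf.Nonempty) {L kf : ℕ} (hdvd : L ∣ kf)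
    {δ : ℕ → ℝ≥0} {xt : ℕ → E} {d : ℕ → F} {vr : ℕ → ℕ → F}
    (hadm : ∀ k < kf, Admissible Uc L kf k (vr k))
    (hopt : ∀ k < kf, ∀ v, Admissible Uc L kf k v →
      terminalMiss f Xf L kf k (xt k) (vr k) ≤ terminalMiss f Xf L kf k (xt k) v)
    (hcl : ∀ k < kf, xt (k + 1) = f (xt k) (vr k 1 + d k))
    (hd : ∀ k < kf, ‖d k‖₊ ≤ δ k)
    {v₀ : ℕ → F} (hv₀ : Admissible Uc L kf 0 v₀) :
    Metric.infNndist (xt kf) Xf ≤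
      terminalMiss f Xf L kf 0 (xt 0) v₀ +
        ∑ k ∈ Finset.range kf, beta au ax (kf - k - 1) (δ k) := by
  have h_error : ∀ k < kf, nndist (xt (k + 1)) (f (xt k) (vr k 1)) ≤ au (δ k) := fun k hk ↦ by
    rw [hcl k hk]
    exact (hfu _ _ _).trans (hau (by simpa [nndist_eq_nnnorm] using hd k hk))
  obtain ⟨v, -, hv⟩ :=
    exists_admissible_terminalMiss_le hax hfx hdvd hadm hopt h_error hv₀ le_rfl
  rw [terminalMiss, Nat.sub_self, traj] at hv
  exact hv.trans (by gcongr; exact iterate_le_beta hax au _ _)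

/-- Theorem 1: uniformly bounded terminal accuracy of the two-step
relaxed SBPC strategy. If (i) the nominal FHOCP is feasible at time 0 (terminal
constraint), (ii) at each time k the controller selects an admissible blocked sequence
minimizing the nominal terminal distance to X_f, and (iii) the closed loop evolves with
input disturbance bounded by d̄, then Δ(x̃(k_f), X_f) ≤ Σ_{k=0}^{k_f−1} β_{k_f−k−1}(d̄). -/
theorem relaxed_SBPC_terminal_accuracy {E F : Type*}
    [NormedAddCommGroup E] [NormedSpace ℝ E] [NormedAddCommGroup F] [NormedSpace ℝ F]
    (ax au : ℝ≥0 → ℝ≥0) (hax : IsClassK ax) (hau : IsClassK au)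
    (f : E → F → E)
    (hfx : ∀ (x1 x2 : E) (u : F), ‖f x1 u - f x2 u‖₊ ≤ ax ‖x1 - x2‖₊)
    (hfu : ∀ (x : E) (u1 u2 : F), ‖f x u1 - f x u2‖₊ ≤ au ‖u1 - u2‖₊)
    (Uc : Set F) (Xf : Set E) (hXf : Xf.Nonempty)
    (L kf : ℕ) (hL : 1 ≤ L) (hkf : 1 ≤ kf) (hdvd : L ∣ kf)
    (dbar : ℝ≥0) (hdbar : 0 < dbar)
    (xt : ℕ → E) (d : ℕ → F) (vr : ℕ → ℕ → F)
    -- (i) feasibility of the nominal FHOCP at time 0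
    (hfeas0 : ∃ v0 : ℕ → F, Admissible Uc L kf 0 v0 ∧ traj f L v0 (xt 0) 0 kf ∈ Xf)
    -- (ii) at each k, the controller's sequence is admissible and minimizes the
    -- nominal terminal distance to X_f among all admissible sequences
    (hadm : ∀ k < kf, Admissible Uc L kf k (vr k))
    (hopt : ∀ k < kf, ∀ v : ℕ → F, Admissible Uc L kf k v →
      Metric.infNndist (traj f L (vr k) (xt k) k (kf - k)) Xf ≤
        Metric.infNndist (traj f L v (xt k) k (kf - k)) Xf)
    -- (iii) closed-loop evolution with bounded input disturbance
    (hcl : ∀ k < kf, xt (k + 1) = f (xt k) (vr k 1 + d k))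
    (hd : ∀ k < kf, ‖d k‖₊ ≤ dbar) :
    Metric.infNndist (xt kf) Xf ≤ ∑ k ∈ Finset.range kf, beta au ax (kf - k - 1) dbar := by
  obtain ⟨v₀, hv₀, hv₀_mem⟩ := hfeas0
  have h_nominal : terminalMiss f Xf L kf 0 (xt 0) v₀ = 0 :=
    NNReal.eq (Metric.infDist_zero_of_mem hv₀_mem)
  simp_rw [← nndist_eq_nnnorm_sub] at hfx hfu
  simpa only [h_nominal, zero_add] using relaxed_SBPC_terminal_accuracy_general
    hax.2.1.monotone hau.2.1.monotone hfx hfu hXf hdvd hadm hopt hcl hd hv₀
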